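/- Let U₁, U₂ ⊆ ℝ² be open connected sets with U₁ ∩ U₂ ≠ ∅, let R₁, R₂ ⊆ ℂ² be the tube domains over U₁, U₂, and let R be the tube domain over the convex hull of U₁ ∪ U₂. Let α₁, β₁, α₂, β₂, C₁, C₂ > 0 and let g be holomorphic on R with |g(s,w)| ≤ C₁·(1+|Im s|)^{α₁}·(1+|Im w|)^{β₁} for (s,w) ∈ R₁ and |g(s,w)| ≤ C₂·(1+|Im s|)^{α₂}·(1+|Im w|)^{β₂} for (s,w) ∈ R₂. Then there is C > 0, depending only on C₁, C₂, α₁, β₁, α₂, β₂ (in particular not on g, U₁, U₂), such that whenever (s,w) ∈ R, (s₁,w₁) ∈ R₁, (s₂,w₂) ∈ R₂, 0 ≤ t ≤ 1 and (s,w) = t·(s₁,w₁) + (1−t)·(s₂,w₂), one has |g(s,w)| ≤ C·(1+|Im s|)^{tα₁+(1−t)α₂}·(1+|Im w|)^{tβ₁+(1−t)β₂}·(1+|Re s₁ − Re s₂|)^{tα₁+(1−t)α₂}·(1+|Re w₁ − Re w₂|)^{tβ₁+(1−t)β₂}. -/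

import Mathlib

open Complex

/-!
Multiplied by `exp (ε (s² + w²))`, the function `g` is bounded over small subsets of `U₁ ∪ U₂`.
A parabola hanging below one side of a triangle complexifies to an analytic disc inside the tube
over the triangle whose boundary lies over the other two sides, so by the maximum principle bounds
over two sides of a triangle pass to the third. Hence "bounded over the segment `[x, y]`" is a
transitive relation; as it also holds for nearby points, connectedness of `U₁ ∪ U₂` yields it for
every pair of points. Thus `g` grows slower than any Gaussian over the segment from `x₁ ∈ U₁` to
`x₂ ∈ U₂`, and the three lines theorem on the complexified segment interpolates between the
polynomial bounds over its two end points.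
-/

section

open Set Filter Topology HadamardThreeLines

variable {E : Type*} [NormedAddCommGroup E] [NormedSpace ℂ E]

/-- The parabola `v = 1 - ε (1 - u²)` in `ℂ²`. For real `u ∈ [-1, 1]` it hangs below the side
`v = 1` of the triangle `|u| ≤ v ≤ 1`, through both of its end points, and it tends to that side as
`ε → 0`. -/
def parabola (ε : ℝ) (u : ℂ) : ℂ × ℂ :=
  (u, 1 - ε * (1 - u ^ 2))

/-- The set of parameters at which the complex parabola runs inside the tube over the triangle
`|u| < v < 1`. The cut-off at `|Re u| = 1` removes the parts of the plane where `Re v` is large. -/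
def parabolaDisc (ε : ℝ) : Set ℂ :=
  {u | |u.re| < min 1 (parabola ε u).2.re}

theorem parabola_snd_re (ε : ℝ) (u : ℂ) :
    (parabola ε u).2.re = 1 - ε * (1 - u.re ^ 2 + u.im ^ 2) := by
  have hsq : (u ^ 2).re = u.re ^ 2 - u.im ^ 2 := by simp [sq]
  rw [parabola, sub_re, re_ofReal_mul, sub_re, hsq, one_re]
  ring

theorem continuous_parabola_snd_re (ε : ℝ) : Continuous fun u => (parabola ε u).2.re := by
  unfold parabola
  fun_prop

theorem parabola_snd_re_le_one {ε : ℝ} (hε : 0 ≤ ε) {u : ℂ} (hu : |u.re| ≤ 1) :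
    (parabola ε u).2.re ≤ 1 := by
  have hre : u.re ^ 2 ≤ 1 := (sq_le_one_iff_abs_le_one _).2 hu
  rw [parabola_snd_re]
  have : 0 ≤ ε * (1 - u.re ^ 2 + u.im ^ 2) :=
    mul_nonneg hε (add_nonneg (sub_nonneg.2 hre) (sq_nonneg _))
  linarith

theorem abs_re_le_of_mem_closure_parabolaDisc {ε : ℝ} {u : ℂ} (hu : u ∈ closure (parabolaDisc ε)) :
    |u.re| ≤ 1 ∧ |u.re| ≤ (parabola ε u).2.re :=
  le_min_iff.1 <| closure_lt_subset_le continuous_re.abs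
    (continuous_const.min (continuous_parabola_snd_re ε)) hu

theorem abs_re_eq_of_mem_frontier_parabolaDisc {ε : ℝ} (hε : 0 ≤ ε) {u : ℂ}
    (hu : u ∈ frontier (parabolaDisc ε)) : |u.re| = (parabola ε u).2.re := by
  have hle := (abs_re_le_of_mem_closure_parabolaDisc (frontier_subset_closure hu)).1
  rw [← min_eq_right (parabola_snd_re_le_one hε hle)]
  exact frontier_lt_subset_eq continuous_re.abs
    (continuous_const.min (continuous_parabola_snd_re ε)) hu

theorem isBounded_parabolaDisc {ε : ℝ} (hε : 0 < ε) : Bornology.IsBounded (parabolaDisc ε) := by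
  refine isBounded_iff_forall_norm_le.2 ⟨1 + √(1 / ε), fun u hu => ?_⟩
  obtain ⟨hre, hre'⟩ := abs_re_le_of_mem_closure_parabolaDisc (subset_closure hu)
  have him : |u.im| ≤ √(1 / ε) := by
    refine Real.abs_le_sqrt ((le_div_iff₀' hε).2 ?_)
    have hsq : 0 ≤ ε * (1 - u.re ^ 2) :=
      mul_nonneg hε.le (sub_nonneg.2 ((sq_le_one_iff_abs_le_one _).2 hre))
    rw [parabola_snd_re] at hre'
    linarith [abs_nonneg u.re]
  linarith [norm_le_abs_re_add_abs_im u]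

theorem ofReal_mem_parabolaDisc {ε x : ℝ} (hε : 0 ≤ ε) (hε' : ε < 1 / 2) (hx : |x| < 1) :
    (x : ℂ) ∈ parabolaDisc ε := by
  refine lt_min (by simpa using hx) ?_
  rw [parabola_snd_re, ofReal_re, ofReal_im, ← sq_abs x]
  have hfactor : 0 < (1 - |x|) * (1 - ε * (1 + |x|)) :=
    mul_pos (by linarith) (by nlinarith)
  linarith

theorem norm_comp_parabola_le {f : ℂ × ℂ → E} {M : ℝ}
    (hf : ∀ z : ℂ × ℂ, |z.1.re| ≤ z.2.re → z.2.re ≤ 1 → DifferentiableAt ℂ f z)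
    (hM : ∀ z : ℂ × ℂ, |z.1.re| = z.2.re → z.2.re ≤ 1 → ‖f z‖ ≤ M)
    {ε : ℝ} (hε : 0 < ε) {u : ℂ} (hu : u ∈ parabolaDisc ε) : ‖f (parabola ε u)‖ ≤ M := by
  have hsnd {u : ℂ} (hu : u ∈ closure (parabolaDisc ε)) : (parabola ε u).2.re ≤ 1 :=
    parabola_snd_re_le_one hε.le (abs_re_le_of_mem_closure_parabolaDisc hu).1
  have hdiff : DiffContOnCl ℂ (fun u => f (parabola ε u)) (parabolaDisc ε) := by
    refine DifferentiableOn.diffContOnCl fun u hu => ?_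
    have hparabola : DifferentiableAt ℂ (parabola ε) u := by
      unfold parabola
      fun_prop
    exact ((hf _ (abs_re_le_of_mem_closure_parabolaDisc hu).2 (hsnd hu)).comp u
      hparabola).differentiableWithinAt
  exact norm_le_of_forall_mem_frontier_norm_le (isBounded_parabolaDisc hε) hdiff
    (fun u hu => hM _ (abs_re_eq_of_mem_frontier_parabolaDisc hε.le hu)
      (hsnd (frontier_subset_closure hu))) (subset_closure hu)

theorem norm_le_on_third_side_of_standard_triangle {f : ℂ × ℂ → E} {M : ℝ}
    (hf : ∀ z : ℂ × ℂ, |z.1.re| ≤ z.2.re → z.2.re ≤ 1 → DifferentiableAt ℂ f z)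
    (hM : ∀ z : ℂ × ℂ, |z.1.re| = z.2.re → z.2.re ≤ 1 → ‖f z‖ ≤ M)
    {x : ℝ} (hx : |x| ≤ 1) : ‖f (x, 1)‖ ≤ M := by
  rcases hx.eq_or_lt with hx | hx
  · exact hM _ (by simpa using hx) (by simp)
  have hlim : Tendsto (fun ε : ℝ => ‖f (parabola ε x)‖) (𝓝[>] 0) (𝓝 ‖f (x, 1)‖) := by
    have hfx : ContinuousAt f (parabola 0 x) :=
      (hf _ (by simpa [parabola] using hx.le) (by simp [parabola])).continuousAt
    have hparabola : ContinuousAt (fun ε : ℝ => parabola ε x) 0 := by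
      unfold parabola
      fun_prop
    simpa [parabola] using
      (hfx.comp (f := fun ε : ℝ => parabola ε x) hparabola).norm.tendsto.mono_left
        nhdsWithin_le_nhds
  refine le_of_tendsto hlim ?_
  filter_upwards [Ioo_mem_nhdsGT (show (0 : ℝ) < 1 / 2 by norm_num)] with ε hε
  exact norm_comp_parabola_le hf hM hε.1 (ofReal_mem_parabolaDisc hε.1.le hε.2 hx)

/-- The tube domain in `ℂ²` over a subset of `ℝ²`. -/
def tube (U : Set (ℝ × ℝ)) : Set (ℂ × ℂ) :=
  {z | (z.1.re, z.2.re) ∈ U}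

theorem tube_mono {U V : Set (ℝ × ℝ)} (h : U ⊆ V) : tube U ⊆ tube V :=
  fun _ hz => h hz

theorem isOpen_tube {U : Set (ℝ × ℝ)} (hU : IsOpen U) : IsOpen (tube U) :=
  hU.preimage (by fun_prop : Continuous fun z : ℂ × ℂ => (z.1.re, z.2.re))

theorem triangle_combination_mem {V : Type*} [AddCommGroup V] [Module ℝ V] {H : Set V}
    (hH : Convex ℝ H) {o p q : V} (ho : o ∈ H) (hp : p ∈ H) (hq : q ∈ H) {u v : ℝ}
    (huv : |u| ≤ v) (hv : v ≤ 1) :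
    (1 - v) • o + ((v + u) / 2) • p + ((v - u) / 2) • q ∈ H := by
  obtain ⟨hl, hr⟩ := abs_le.1 huv
  have := hH.sum_mem (t := Finset.univ) (w := ![1 - v, (v + u) / 2, (v - u) / 2]) (z := ![o, p, q])
    (by intro i _; fin_cases i <;> simp <;> linarith)
    (by simp [Fin.sum_univ_three]; ring) (by intro i _; fin_cases i <;> simp [ho, hp, hq])
  simpa [Fin.sum_univ_three] using this

theorem norm_le_on_tube_third_side {f : ℂ × ℂ → E} {H : Set (ℝ × ℝ)} (hH : Convex ℝ H)
    (hf : ∀ z ∈ tube H, DifferentiableAt ℂ f z) {M : ℝ} {o p q : ℝ × ℝ}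
    (ho : o ∈ H) (hp : p ∈ H) (hq : q ∈ H)
    (hpo : ∀ z ∈ tube (segment ℝ p o), ‖f z‖ ≤ M) (hoq : ∀ z ∈ tube (segment ℝ o q), ‖f z‖ ≤ M) :
    ∀ z ∈ tube (segment ℝ p q), ‖f z‖ ≤ M := by
  rintro z ⟨a, b, ha, hb, hab, hz⟩
  -- `ψ` maps the standard triangle to the triangle `o p q` and the point `(a - b, 1)` to `z`.
  let ψ : ℂ × ℂ → ℂ × ℂ := fun w =>
    (z.1 + (w.2 - 1) * ((p.1 + q.1) / 2 - o.1 : ℝ) + (w.1 - (a - b : ℝ)) * ((p.1 - q.1) / 2 : ℝ),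
      z.2 + (w.2 - 1) * ((p.2 + q.2) / 2 - o.2 : ℝ) + (w.1 - (a - b : ℝ)) * ((p.2 - q.2) / 2 : ℝ))
  have hψ_top : ψ ((a - b : ℝ), 1) = z := by simp [ψ]
  have hψ_re (w : ℂ × ℂ) : ((ψ w).1.re, (ψ w).2.re) =
      (1 - w.2.re) • o + ((w.2.re + w.1.re) / 2) • p + ((w.2.re - w.1.re) / 2) • q := by
    obtain ⟨hz₁, hz₂⟩ := Prod.ext_iff.1 hz
    obtain rfl : b = 1 - a := by linarith
    simp only [Prod.fst_add, Prod.snd_add, Prod.smul_fst, Prod.smul_snd, smul_eq_mul] at hz₁ hz₂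
    ext <;> simp [ψ, ← hz₁, ← hz₂] <;> ring
  rw [← hψ_top]
  refine norm_le_on_third_side_of_standard_triangle (f := f ∘ ψ) (fun w huv hv => ?_)
    (fun w huv hv => ?_) (abs_le.2 ⟨by linarith, by linarith⟩)
  · have hψ : DifferentiableAt ℂ ψ w := by fun_prop
    refine (hf _ ?_).comp w hψ
    rw [tube, mem_ofPred_eq, hψ_re]
    exact triangle_combination_mem hH ho hp hq huv hv
  · have hv₀ : 0 ≤ w.2.re := huv ▸ abs_nonneg _
    rcases abs_eq hv₀ |>.1 huv with h | h
    · refine hpo _ ⟨w.2.re, 1 - w.2.re, hv₀, by linarith, by ring, ?_⟩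
      rw [hψ_re, h]
      module
    · refine hoq _ ⟨1 - w.2.re, w.2.re, by linarith, hv₀, by ring, ?_⟩
      rw [hψ_re, h]
      module

theorem exists_norm_le_on_tube_segment {U : Set (ℝ × ℝ)} (hU : IsPreconnected U) {f : ℂ × ℂ → E}
    (hf : ∀ z ∈ tube (convexHull ℝ U), DifferentiableAt ℂ f z)
    (hloc : ∀ x ∈ U, ∃ M, ∀ᶠ y in 𝓝 x, ∀ z ∈ tube {y}, ‖f z‖ ≤ M)
    {p q : ℝ × ℝ} (hp : p ∈ U) (hq : q ∈ U) : ∃ M, ∀ z ∈ tube (segment ℝ p q), ‖f z‖ ≤ M := by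
  refine hU.induction₂ (fun x y => ∃ M, ∀ z ∈ tube (segment ℝ x y), ‖f z‖ ≤ M) ?nearby ?trans
    ?symm hp hq
  case nearby =>
    intro x hx
    obtain ⟨M, hM⟩ := hloc x hx
    obtain ⟨r, hr, hball⟩ := Metric.eventually_nhds_iff_ball.1 hM
    filter_upwards [mem_nhdsWithin_of_mem_nhds (Metric.ball_mem_nhds x hr)] with y hy
    have hseg := (convex_ball x r).segment_subset (Metric.mem_ball_self hr) hy
    exact ⟨M, fun z hz => hball _ (hseg hz) z rfl⟩
  case trans =>
    rintro x y z hx hy hz ⟨M, hM⟩ ⟨M', hM'⟩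
    have hsub := subset_convexHull ℝ U
    exact ⟨max M M', norm_le_on_tube_third_side (convex_convexHull ℝ U) hf (hsub hy) (hsub hx)
      (hsub hz) (fun w hw => (hM w hw).trans (le_max_left _ _))
      (fun w hw => (hM' w hw).trans (le_max_right _ _))⟩
  case symm =>
    rintro x y - - ⟨M, hM⟩
    exact ⟨M, by rwa [segment_symm]⟩

theorem exists_norm_le_exp_on_tube_segment {U : Set (ℝ × ℝ)} (hUo : IsOpen U)
    (hU : IsPreconnected U) {g : ℂ × ℂ → E}
    (hg : ∀ z ∈ tube (convexHull ℝ U), DifferentiableAt ℂ g z) {ε K : ℝ} (hε : 0 ≤ ε)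
    (hK : ∀ z ∈ tube U, ‖g z‖ ≤ K * Real.exp (ε * (z.1.im ^ 2 + z.2.im ^ 2)))
    {p q : ℝ × ℝ} (hp : p ∈ U) (hq : q ∈ U) :
    ∃ M, ∀ z ∈ tube (segment ℝ p q), ‖g z‖ ≤ M * Real.exp (ε * (z.1.im ^ 2 + z.2.im ^ 2)) := by
  let f : ℂ × ℂ → E := fun z => cexp (ε * (z.1 ^ 2 + z.2 ^ 2)) • g z
  have hnorm (z : ℂ × ℂ) : ‖f z‖ = Real.exp (ε * (z.1.re ^ 2 + z.2.re ^ 2)) *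
      (Real.exp (ε * (z.1.im ^ 2 + z.2.im ^ 2)))⁻¹ * ‖g z‖ := by
    rw [norm_smul, norm_exp, ← Real.exp_neg, ← Real.exp_add]
    congr 2
    simp [sq]
    ring
  have hf : ∀ z ∈ tube (convexHull ℝ U), DifferentiableAt ℂ f z := by
    intro z hz
    have := hg z hz
    fun_prop
  have hloc : ∀ x ∈ U, ∃ M, ∀ᶠ y in 𝓝 x, ∀ z ∈ tube {y}, ‖f z‖ ≤ M := by
    intro x hx
    have hcont : Continuous fun y : ℝ × ℝ => Real.exp (ε * (y.1 ^ 2 + y.2 ^ 2)) * K := by fun_prop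
    obtain ⟨M, hM⟩ := exists_gt (Real.exp (ε * (x.1 ^ 2 + x.2 ^ 2)) * K)
    have hnear := (hcont.tendsto x).eventually_le_const hM
    refine ⟨M, ((hUo.eventually_mem hx).and hnear).mono ?_⟩
    rintro _ ⟨hyU, hy⟩ z rfl
    rw [hnorm, mul_assoc]
    refine le_trans ?_ hy
    gcongr
    rw [inv_mul_le_iff₀' (Real.exp_pos _)]
    exact hK z hyU
  obtain ⟨M, hM⟩ := exists_norm_le_on_tube_segment hU hf hloc hp hq
  refine ⟨M, fun z hz => ?_⟩
  rw [← inv_mul_le_iff₀' (Real.exp_pos _)]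
  refine le_trans ?_ ((hnorm z).symm.trans_le (hM z hz))
  gcongr
  exact le_mul_of_one_le_left (by positivity) (Real.one_le_exp (by positivity))

theorem norm_le_interp_of_norm_le_exp_sq {f : ℂ → E}
    (hf : DiffContOnCl ℂ f (verticalStrip 0 1)) {M a b : ℝ}
    (hM : ∀ z ∈ verticalClosedStrip 0 1, ‖f z‖ ≤ M * Real.exp (z.im ^ 2))
    (ha : ∀ z : ℂ, z.re = 0 → ‖f z‖ ≤ a * Real.exp (z.im ^ 2))
    (hb : ∀ z : ℂ, z.re = 1 → ‖f z‖ ≤ b * Real.exp (z.im ^ 2))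
    {z : ℂ} (hz : z ∈ verticalClosedStrip 0 1) :
    ‖f z‖ ≤ Real.exp (z.re * (1 - z.re) + z.im ^ 2) * (a ^ (1 - z.re) * b ^ z.re) := by
  -- `exp (z (z - 1))` decays like `exp (-Im z ^ 2)`, with that exact modulus on both edges.
  let h : ℂ → E := fun z => cexp (z * (z - 1)) • f z
  have hnorm (z : ℂ) : ‖h z‖ = (Real.exp (z.re * (1 - z.re) + z.im ^ 2))⁻¹ * ‖f z‖ := by
    rw [norm_smul, norm_exp, ← Real.exp_neg]
    congr 2
    simp
    ring
  have hle {z : ℂ} {c : ℝ} (hz : z ∈ verticalClosedStrip 0 1)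
      (hc : ‖f z‖ ≤ c * Real.exp (z.im ^ 2)) : ‖h z‖ ≤ c := by
    have hc₀ : 0 ≤ c := nonneg_of_mul_nonneg_left ((norm_nonneg _).trans hc) (Real.exp_pos _)
    rw [hnorm, inv_mul_le_iff₀' (Real.exp_pos _)]
    refine hc.trans ?_
    gcongr
    exact le_add_of_nonneg_left (mul_nonneg hz.1 (sub_nonneg.2 hz.2))
  have hh : DiffContOnCl ℂ h (verticalStrip 0 1) :=
    DiffContOnCl.smul (Differentiable.diffContOnCl (by fun_prop)) hf
  have hinterp := norm_le_interp_of_mem_verticalClosedStrip₀₁' h hz hh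
    ⟨M, by rintro _ ⟨w, hw, rfl⟩; exact hle hw (hM w hw)⟩
    (fun w hw => hle (by simp_all [verticalClosedStrip]) (ha w hw))
    (fun w hw => hle (by simp_all [verticalClosedStrip]) (hb w hw))
  rwa [hnorm, inv_mul_le_iff₀ (Real.exp_pos _)] at hinterp

theorem one_add_abs_rpow_le_exp {ε : ℝ} (hε : 0 < ε) {α : ℝ} (hα : 0 ≤ α) (x : ℝ) :
    (1 + |x|) ^ α ≤ Real.exp (α ^ 2 / (4 * ε)) * Real.exp (ε * x ^ 2) := by
  have hexp : 1 + |x| ≤ Real.exp |x| := by linarith [Real.add_one_le_exp |x|]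
  have hamgm : |x| * α ≤ α ^ 2 / (4 * ε) + ε * x ^ 2 := by
    rw [← sq_abs x, ← sub_nonneg]
    have : α ^ 2 / (4 * ε) + ε * |x| ^ 2 - |x| * α = (α - 2 * ε * |x|) ^ 2 / (4 * ε) := by
      field_simp
      ring
    rw [this]
    positivity
  calc (1 + |x|) ^ α ≤ Real.exp |x| ^ α := by gcongr
    _ = Real.exp (|x| * α) := (Real.exp_mul _ _).symm
    _ ≤ Real.exp (α ^ 2 / (4 * ε) + ε * x ^ 2) := by gcongr
    _ = _ := Real.exp_add _ _

theorem one_add_abs_add_mul_rpow_le (x v d : ℝ) {α : ℝ} (hα : 0 ≤ α) :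
    (1 + |x + v * d|) ^ α ≤ ((1 + |x|) * (1 + |d|)) ^ α * (1 + |v|) ^ α := by
  rw [← Real.mul_rpow (by positivity) (by positivity)]
  have habs : |x + v * d| ≤ |x| + |v| * |d| := (abs_add_le _ _).trans_eq (by rw [abs_mul])
  gcongr
  calc 1 + |x + v * d| ≤ 1 + |x| + |v| * |d| := by linarith
    _ ≤ 1 + |x| + |v| * |d| + (|d| + |v| + |x| * |d| + |x| * |v| + |x| * |d| * |v|) :=
      le_add_of_nonneg_right (by positivity)
    _ = (1 + |x|) * (1 + |d|) * (1 + |v|) := by ring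

theorem polynomial_bound_on_line_le {C α β : ℝ} (hC : 0 ≤ C) (hα : 0 ≤ α) (hβ : 0 ≤ β)
    (x y d e v : ℝ) :
    C * (1 + |x + v * d|) ^ α * (1 + |y + v * e|) ^ β ≤
      C * Real.exp ((α + β) ^ 2 / 4) * ((1 + |x|) * (1 + |d|)) ^ α * ((1 + |y|) * (1 + |e|)) ^ β *
        Real.exp (v ^ 2) := by
  have hv : (1 + |v|) ^ α * (1 + |v|) ^ β ≤ Real.exp ((α + β) ^ 2 / 4) * Real.exp (v ^ 2) := by
    rw [← Real.rpow_add (by positivity)]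
    simpa using one_add_abs_rpow_le_exp one_pos (add_nonneg hα hβ) v
  calc C * (1 + |x + v * d|) ^ α * (1 + |y + v * e|) ^ β
    _ ≤ C * (((1 + |x|) * (1 + |d|)) ^ α * (1 + |v|) ^ α) *
        (((1 + |y|) * (1 + |e|)) ^ β * (1 + |v|) ^ β) := by
      gcongr
      · exact one_add_abs_add_mul_rpow_le x v d hα
      · exact one_add_abs_add_mul_rpow_le y v e hβ
    _ = C * ((1 + |x|) * (1 + |d|)) ^ α * ((1 + |y|) * (1 + |e|)) ^ β *
        ((1 + |v|) ^ α * (1 + |v|) ^ β) := by ring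
    _ ≤ C * ((1 + |x|) * (1 + |d|)) ^ α * ((1 + |y|) * (1 + |e|)) ^ β *
        (Real.exp ((α + β) ^ 2 / 4) * Real.exp (v ^ 2)) := by gcongr
    _ = _ := by ring

theorem rpow_mul_rpow_le_max {a b t : ℝ} (ha : 0 ≤ a) (hb : 0 ≤ b) (ht₀ : 0 ≤ t) (ht₁ : t ≤ 1) :
    a ^ t * b ^ (1 - t) ≤ max a b :=
  (Real.geom_mean_le_arith_mean2_weighted ht₀ (sub_nonneg.2 ht₁) ha hb (by ring)).trans
    (Convex.combo_le_max _ _ ht₀ (sub_nonneg.2 ht₁) (by ring))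

theorem weighted_geom_mean_monomials_le {K₁ K₂ A B t : ℝ} (hK₁ : 0 ≤ K₁) (hK₂ : 0 ≤ K₂)
    (hA : 0 < A) (hB : 0 < B) (ht₀ : 0 ≤ t) (ht₁ : t ≤ 1) (α₁ β₁ α₂ β₂ : ℝ) :
    (K₁ * A ^ α₁ * B ^ β₁) ^ t * (K₂ * A ^ α₂ * B ^ β₂) ^ (1 - t) ≤
      max K₁ K₂ * A ^ (t * α₁ + (1 - t) * α₂) * B ^ (t * β₁ + (1 - t) * β₂) := by
  have hpow {K : ℝ} (hK : 0 ≤ K) (α β r : ℝ) :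
      (K * A ^ α * B ^ β) ^ r = K ^ r * A ^ (r * α) * B ^ (r * β) := by
    rw [Real.mul_rpow (by positivity) (by positivity), Real.mul_rpow hK (by positivity),
      ← Real.rpow_mul hA.le, ← Real.rpow_mul hB.le, mul_comm α, mul_comm β]
  rw [hpow hK₁, hpow hK₂, Real.rpow_add hA, Real.rpow_add hB]
  calc _ = K₁ ^ t * K₂ ^ (1 - t) * (A ^ (t * α₁) * A ^ ((1 - t) * α₂)) *
        (B ^ (t * β₁) * B ^ ((1 - t) * β₂)) := by ring
    _ ≤ _ := by
      gcongr
      exact rpow_mul_rpow_le_max hK₁ hK₂ ht₀ ht₁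

/-- The complex line through `z` in the real direction `d`, parametrized so that `t ↦ z`. -/
def realLine (z : ℂ × ℂ) (d : ℝ × ℝ) (t : ℝ) (ζ : ℂ) : ℂ × ℂ :=
  (z.1 + (ζ - t) * d.1, z.2 + (ζ - t) * d.2)

theorem realLine_self (z : ℂ × ℂ) (d : ℝ × ℝ) (t : ℝ) : realLine z d t t = z := by
  simp [realLine]

theorem differentiable_realLine (z : ℂ × ℂ) (d : ℝ × ℝ) (t : ℝ) :
    Differentiable ℂ (realLine z d t) := by
  unfold realLine
  fun_prop

theorem realLine_im (z : ℂ × ℂ) (d : ℝ × ℝ) (t : ℝ) (ζ : ℂ) :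
    (realLine z d t ζ).1.im = z.1.im + ζ.im * d.1 ∧
      (realLine z d t ζ).2.im = z.2.im + ζ.im * d.2 := by
  simp [realLine]

theorem realLine_re {z : ℂ × ℂ} {x₁ x₂ : ℝ × ℝ} {t : ℝ}
    (hz : (z.1.re, z.2.re) = t • x₁ + (1 - t) • x₂) (ζ : ℂ) :
    ((realLine z (x₁ - x₂) t ζ).1.re, (realLine z (x₁ - x₂) t ζ).2.re) =
      ζ.re • x₁ + (1 - ζ.re) • x₂ := by
  obtain ⟨hz₁, hz₂⟩ := Prod.ext_iff.1 hz
  simp only [Prod.fst_add, Prod.snd_add, Prod.smul_fst, Prod.smul_snd, smul_eq_mul] at hz₁ hz₂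
  ext <;> simp [realLine, hz₁, hz₂] <;> ring

theorem exp_im_sq_realLine_le (z : ℂ × ℂ) (d : ℝ × ℝ) (t : ℝ) :
    ∃ ε > 0, ∃ K, ∀ ζ, Real.exp (ε * ((realLine z d t ζ).1.im ^ 2 + (realLine z d t ζ).2.im ^ 2)) ≤
      K * Real.exp (ζ.im ^ 2) := by
  refine ⟨1 / (2 * (1 + (d.1 ^ 2 + d.2 ^ 2))), by positivity,
    Real.exp (z.1.im ^ 2 + z.2.im ^ 2), fun ζ => ?_⟩
  rw [← Real.exp_add, (realLine_im z d t ζ).1, (realLine_im z d t ζ).2]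
  gcongr
  rw [one_div, inv_mul_le_iff₀ (by positivity)]
  have h₁ := add_sq_le (a := z.1.im) (b := ζ.im * d.1)
  have h₂ := add_sq_le (a := z.2.im) (b := ζ.im * d.2)
  have h₃ : 0 ≤ (d.1 ^ 2 + d.2 ^ 2) * (z.1.im ^ 2 + z.2.im ^ 2) + ζ.im ^ 2 := by positivity
  linear_combination h₁ + h₂ + 2 * h₃

theorem norm_le_interp_of_bounds_on_realLine {g : ℂ × ℂ → E} {x₁ x₂ : ℝ × ℝ} {z : ℂ × ℂ} {t : ℝ}
    (ht₀ : 0 ≤ t) (ht₁ : t ≤ 1) (hz : (z.1.re, z.2.re) = t • x₁ + (1 - t) • x₂)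
    (hg : ∀ w ∈ tube (segment ℝ x₁ x₂), DifferentiableAt ℂ g w)
    (hgrowth : ∀ ε > 0, ∃ M, ∀ w ∈ tube (segment ℝ x₁ x₂),
      ‖g w‖ ≤ M * Real.exp (ε * (w.1.im ^ 2 + w.2.im ^ 2)))
    {a₁ a₂ : ℝ}
    (h₁ : ∀ ζ : ℂ, ζ.re = 1 → ‖g (realLine z (x₁ - x₂) t ζ)‖ ≤ a₁ * Real.exp (ζ.im ^ 2))
    (h₂ : ∀ ζ : ℂ, ζ.re = 0 → ‖g (realLine z (x₁ - x₂) t ζ)‖ ≤ a₂ * Real.exp (ζ.im ^ 2)) :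
    ‖g z‖ ≤ Real.exp (1 / 4) * (a₁ ^ t * a₂ ^ (1 - t)) := by
  have hmem {ζ : ℂ} (hζ : ζ ∈ verticalClosedStrip 0 1) :
      realLine z (x₁ - x₂) t ζ ∈ tube (segment ℝ x₁ x₂) :=
    ⟨ζ.re, 1 - ζ.re, hζ.1, sub_nonneg.2 hζ.2, by ring, (realLine_re hz ζ).symm⟩
  have ht : (t : ℂ) ∈ verticalClosedStrip 0 1 := ⟨by simpa using ht₀, by simpa using ht₁⟩
  have hdiff : DiffContOnCl ℂ (fun ζ => g (realLine z (x₁ - x₂) t ζ)) (verticalStrip 0 1) := by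
    refine DifferentiableOn.diffContOnCl fun ζ hζ => ?_
    have hζ' : ζ ∈ verticalClosedStrip 0 1 :=
      closure_minimal (preimage_mono Ioo_subset_Icc_self) (isClosed_Icc.preimage continuous_re) hζ
    exact ((hg _ (hmem hζ')).comp ζ (differentiable_realLine _ _ _ ζ)).differentiableWithinAt
  obtain ⟨ε, hε, K, hK⟩ := exp_im_sq_realLine_le z (x₁ - x₂) t
  obtain ⟨M, hM⟩ := hgrowth ε hε
  have hM₀ : 0 ≤ M :=
    nonneg_of_mul_nonneg_left ((norm_nonneg _).trans (hM _ (hmem ht))) (Real.exp_pos _)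
  have hstrip : ∀ ζ ∈ verticalClosedStrip 0 1,
      ‖g (realLine z (x₁ - x₂) t ζ)‖ ≤ M * K * Real.exp (ζ.im ^ 2) := fun ζ hζ =>
    (hM _ (hmem hζ)).trans ((mul_le_mul_of_nonneg_left (hK ζ) hM₀).trans_eq (mul_assoc _ _ _).symm)
  have hinterp := norm_le_interp_of_norm_le_exp_sq hdiff hstrip h₂ h₁ ht
  have ha₁ : 0 ≤ a₁ := by simpa using (norm_nonneg _).trans (h₁ 1 one_re)
  have ha₂ : 0 ≤ a₂ := by simpa using (norm_nonneg _).trans (h₂ 0 zero_re)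
  simp only [realLine_self, ofReal_re, ofReal_im] at hinterp
  rw [mul_comm (a₁ ^ t)]
  refine hinterp.trans ?_
  gcongr
  linarith [sq_nonneg (t - 1 / 2)]

theorem coeff_nonneg_of_polynomial_bound {F : Type*} [SeminormedAddGroup F] {U : Set (ℝ × ℝ)}
    {g : ℂ × ℂ → F} {C α β : ℝ}
    (h : ∀ z ∈ tube U, ‖g z‖ ≤ C * (1 + |z.1.im|) ^ α * (1 + |z.2.im|) ^ β) {x : ℝ × ℝ}
    (hx : x ∈ U) : 0 ≤ C := by
  simpa using (norm_nonneg _).trans (h (x.1, x.2) hx)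

theorem exists_norm_le_exp_of_polynomial_bound {F : Type*} [SeminormedAddGroup F]
    {U : Set (ℝ × ℝ)} {g : ℂ × ℂ → F} {C α β : ℝ} (hα : 0 ≤ α) (hβ : 0 ≤ β)
    (h : ∀ z ∈ tube U, ‖g z‖ ≤ C * (1 + |z.1.im|) ^ α * (1 + |z.2.im|) ^ β) {ε : ℝ} (hε : 0 < ε) :
    ∃ K, ∀ z ∈ tube U, ‖g z‖ ≤ K * Real.exp (ε * (z.1.im ^ 2 + z.2.im ^ 2)) := by
  refine ⟨C * Real.exp (α ^ 2 / (4 * ε)) * Real.exp (β ^ 2 / (4 * ε)), fun z hz => ?_⟩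
  have hC := coeff_nonneg_of_polynomial_bound h hz
  calc ‖g z‖ ≤ C * (1 + |z.1.im|) ^ α * (1 + |z.2.im|) ^ β := h z hz
    _ ≤ C * (Real.exp (α ^ 2 / (4 * ε)) * Real.exp (ε * z.1.im ^ 2)) *
        (Real.exp (β ^ 2 / (4 * ε)) * Real.exp (ε * z.2.im ^ 2)) := by
      gcongr <;> exact one_add_abs_rpow_le_exp hε ‹_› _
    _ = _ := by
      rw [mul_add, Real.exp_add]
      ring

theorem norm_realLine_le_of_polynomial_bound {F : Type*} [SeminormedAddGroup F]
    {U : Set (ℝ × ℝ)} {g : ℂ × ℂ → F} {C α β : ℝ} (hα : 0 ≤ α) (hβ : 0 ≤ β)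
    (h : ∀ z ∈ tube U, ‖g z‖ ≤ C * (1 + |z.1.im|) ^ α * (1 + |z.2.im|) ^ β)
    {x : ℝ × ℝ} (hx : x ∈ U) {z : ℂ × ℂ} {d : ℝ × ℝ} {t : ℝ} {ζ : ℂ}
    (hζ : ((realLine z d t ζ).1.re, (realLine z d t ζ).2.re) = x) :
    ‖g (realLine z d t ζ)‖ ≤ C * Real.exp ((α + β) ^ 2 / 4) *
      ((1 + |z.1.im|) * (1 + |d.1|)) ^ α * ((1 + |z.2.im|) * (1 + |d.2|)) ^ β *
        Real.exp (ζ.im ^ 2) := by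
  have hle := h (realLine z d t ζ) (by rwa [tube, mem_ofPred_eq, hζ])
  rw [(realLine_im z d t ζ).1, (realLine_im z d t ζ).2] at hle
  exact hle.trans
    (polynomial_bound_on_line_le (coeff_nonneg_of_polynomial_bound h hx) hα hβ _ _ _ _ _)

theorem statement9_general {α₁ β₁ α₂ β₂ C₁ C₂ : ℝ}
    (hα₁ : 0 ≤ α₁) (hβ₁ : 0 ≤ β₁) (hα₂ : 0 ≤ α₂) (hβ₂ : 0 ≤ β₂) {U₁ U₂ : Set (ℝ × ℝ)}
    (hUo : IsOpen (U₁ ∪ U₂)) (hU : IsPreconnected (U₁ ∪ U₂)) {g : ℂ × ℂ → E}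
    (hg : DifferentiableOn ℂ g (tube (convexHull ℝ (U₁ ∪ U₂))))
    (h₁ : ∀ z ∈ tube U₁, ‖g z‖ ≤ C₁ * (1 + |z.1.im|) ^ α₁ * (1 + |z.2.im|) ^ β₁)
    (h₂ : ∀ z ∈ tube U₂, ‖g z‖ ≤ C₂ * (1 + |z.1.im|) ^ α₂ * (1 + |z.2.im|) ^ β₂)
    {x₁ x₂ : ℝ × ℝ} (hx₁ : x₁ ∈ U₁) (hx₂ : x₂ ∈ U₂) {t : ℝ} (ht₀ : 0 ≤ t) (ht₁ : t ≤ 1)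
    {z : ℂ × ℂ} (hz : (z.1.re, z.2.re) = t • x₁ + (1 - t) • x₂) :
    ‖g z‖ ≤
      Real.exp (1 / 4) *
          max (C₁ * Real.exp ((α₁ + β₁) ^ 2 / 4)) (C₂ * Real.exp ((α₂ + β₂) ^ 2 / 4))
        * (1 + |z.1.im|) ^ (t * α₁ + (1 - t) * α₂) * (1 + |z.2.im|) ^ (t * β₁ + (1 - t) * β₂)
        * (1 + |x₁.1 - x₂.1|) ^ (t * α₁ + (1 - t) * α₂)
        * (1 + |x₁.2 - x₂.2|) ^ (t * β₁ + (1 - t) * β₂) := by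
  have hC₁ := coeff_nonneg_of_polynomial_bound h₁ hx₁
  have hC₂ := coeff_nonneg_of_polynomial_bound h₂ hx₂
  have hdiff : ∀ w ∈ tube (convexHull ℝ (U₁ ∪ U₂)), DifferentiableAt ℂ g w := fun w hw =>
    hg.differentiableAt ((isOpen_tube hUo.convexHull).mem_nhds hw)
  have hsegment : segment ℝ x₁ x₂ ⊆ convexHull ℝ (U₁ ∪ U₂) :=
    segment_subset_convexHull (.inl hx₁) (.inr hx₂)
  have hgrowth : ∀ ε > 0, ∃ M, ∀ w ∈ tube (segment ℝ x₁ x₂),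
      ‖g w‖ ≤ M * Real.exp (ε * (w.1.im ^ 2 + w.2.im ^ 2)) := by
    intro ε hε
    obtain ⟨K₁, hK₁⟩ := exists_norm_le_exp_of_polynomial_bound hα₁ hβ₁ h₁ hε
    obtain ⟨K₂, hK₂⟩ := exists_norm_le_exp_of_polynomial_bound hα₂ hβ₂ h₂ hε
    have hK : ∀ w ∈ tube (U₁ ∪ U₂),
        ‖g w‖ ≤ max K₁ K₂ * Real.exp (ε * (w.1.im ^ 2 + w.2.im ^ 2)) := by
      rintro w (hw | hw)
      · exact (hK₁ w hw).trans (by gcongr; exact le_max_left _ _)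
      · exact (hK₂ w hw).trans (by gcongr; exact le_max_right _ _)
    exact exists_norm_le_exp_on_tube_segment hUo hU hdiff hε.le hK (.inl hx₁) (.inr hx₂)
  have hinterp := norm_le_interp_of_bounds_on_realLine ht₀ ht₁ hz
    (fun w hw => hdiff w (tube_mono hsegment hw)) hgrowth
    (fun ζ hζ => norm_realLine_le_of_polynomial_bound hα₁ hβ₁ h₁ hx₁
      (by rw [realLine_re hz, hζ]; simp))
    (fun ζ hζ => norm_realLine_le_of_polynomial_bound hα₂ hβ₂ h₂ hx₂
      (by rw [realLine_re hz, hζ]; simp))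
  have hmonomials := weighted_geom_mean_monomials_le (A := (1 + |z.1.im|) * (1 + |x₁.1 - x₂.1|))
    (B := (1 + |z.2.im|) * (1 + |x₁.2 - x₂.2|))
    (mul_nonneg hC₁ (Real.exp_nonneg ((α₁ + β₁) ^ 2 / 4)))
    (mul_nonneg hC₂ (Real.exp_nonneg ((α₂ + β₂) ^ 2 / 4)))
    (by positivity) (by positivity) ht₀ ht₁ α₁ β₁ α₂ β₂
  refine (hinterp.trans (mul_le_mul_of_nonneg_left hmonomials (Real.exp_pos _).le)).trans_eq ?_
  rw [Real.mul_rpow (by positivity) (by positivity), Real.mul_rpow (by positivity) (by positivity)]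
  ring

end

/-- Phragmén–Lindelöf interpolation of polynomial bounds on two overlapping tube
domains to the tube over the convex hull, with an absolute constant depending only on the data
`C₁, C₂, α₁, β₁, α₂, β₂`. -/
theorem statement9
    (α₁ β₁ α₂ β₂ C₁ C₂ : ℝ)
    (hα₁ : 0 < α₁) (hβ₁ : 0 < β₁) (hα₂ : 0 < α₂) (hβ₂ : 0 < β₂)
    (hC₁ : 0 < C₁) (hC₂ : 0 < C₂) :
    ∃ C : ℝ, 0 < C ∧
      ∀ (U₁ U₂ : Set (ℝ × ℝ)),
        IsOpen U₁ → IsConnected U₁ → IsOpen U₂ → IsConnected U₂ → (U₁ ∩ U₂).Nonempty →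
        ∀ g : ℂ × ℂ → ℂ,
          DifferentiableOn ℂ g {p : ℂ × ℂ | (p.1.re, p.2.re) ∈ convexHull ℝ (U₁ ∪ U₂)} →
          (∀ p : ℂ × ℂ, (p.1.re, p.2.re) ∈ U₁ →
            ‖g p‖ ≤ C₁ * (1 + |p.1.im|) ^ α₁ * (1 + |p.2.im|) ^ β₁) →
          (∀ p : ℂ × ℂ, (p.1.re, p.2.re) ∈ U₂ →
            ‖g p‖ ≤ C₂ * (1 + |p.1.im|) ^ α₂ * (1 + |p.2.im|) ^ β₂) →
          ∀ (s w s₁ w₁ s₂ w₂ : ℂ) (t : ℝ), 0 ≤ t → t ≤ 1 →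
            (s.re, w.re) ∈ convexHull ℝ (U₁ ∪ U₂) →
            (s₁.re, w₁.re) ∈ U₁ → (s₂.re, w₂.re) ∈ U₂ →
            s = (t : ℂ) * s₁ + (1 - (t : ℂ)) * s₂ →
            w = (t : ℂ) * w₁ + (1 - (t : ℂ)) * w₂ →
            ‖g (s, w)‖ ≤ C * (1 + |s.im|) ^ (t * α₁ + (1 - t) * α₂)
              * (1 + |w.im|) ^ (t * β₁ + (1 - t) * β₂)
              * (1 + |s₁.re - s₂.re|) ^ (t * α₁ + (1 - t) * α₂)
              * (1 + |w₁.re - w₂.re|) ^ (t * β₁ + (1 - t) * β₂) := by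
  refine ⟨_, by positivity, fun U₁ U₂ ho₁ hc₁ ho₂ hc₂ hne g hg h₁ h₂ s w s₁ w₁ s₂ w₂ t ht₀ ht₁ _
    hm₁ hm₂ hs hw => statement9_general hα₁.le hβ₁.le hα₂.le hβ₂.le (ho₁.union ho₂)
      (hc₁.union hne hc₂).isPreconnected hg h₁ h₂ hm₁ hm₂ ht₀ ht₁ (by simp [hs, hw])⟩
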